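/- Let (X,Y) be a binary source pair, N = 4, and U⁴ = X⁴ G₄ with G₄ the 4×4 polar transform over GF(2). Then H(U₁ | Y⁴) ≥ H(U₂ | Y⁴, U₁) and H(U₃ | Y⁴, U¹, U₂) ≥ H(U₄ | Y⁴, U₁, U₂, U₃). -/

import Mathlib

open Matrix

/-- The 4×4 polar transform `G₄ = [[1,0],[1,1]]^{⊗2} B₄` over GF(2)
(it satisfies `G₄⁻¹ = G₄`). -/
def G4 : Matrix (Fin 4) (Fin 4) (ZMod 2) :=
  !![1, 0, 0, 0; 1, 0, 1, 0; 1, 1, 0, 0; 1, 1, 1, 1]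

/-- Conditional Shannon entropy (base 2) of a joint pmf `q x y`. -/
noncomputable def condEnt {α β : Type*} [Fintype α] (q : α → β → ℝ) : ℝ :=
  ∑' y : β, ∑ x : α, -(q x y * Real.logb 2 (q x y / ∑ x' : α, q x' y))

/-- Joint pmf of `(U⁴, Y⁴)` where `(X_i,Y_i)` are i.i.d. copies of the source
`p` and `U⁴ = X⁴ G₄` (equivalently `X⁴ = U⁴ G₄`). -/
noncomputable def pU4 (p : ZMod 2 → ℕ → ℝ) (u : Fin 4 → ZMod 2)
    (y : Fin 4 → ℕ) : ℝ :=
  ∏ i : Fin 4, p (Matrix.vecMul u G4 i) (y i)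

/-!
One polarization step turns two independent copies `(S, Y)`, `(T, Z)` of a source into
`(S - T, T)`. Given the observations, `S - T` is at least as uncertain as `S` and as `T`, because
subtracting an independent variable mixes translates of the law. As
`H(S - T) + H(T | S - T) = H(S) + H(T)`, it follows that `H(T | S - T) ≤ H(S - T)`. The four-fold
transform is two nested steps, and each of the two inequalities compares the two outputs of an
outer step.
-/

open Real

section ScaledEntropy

lemma sum_mul_negMulLog_sub_le {ι : Type*} {s : Finset ι} {w f : ι → ℝ} (hw : ∀ i ∈ s, 0 ≤ w i)
    (hf : ∀ i ∈ s, 0 ≤ f i) :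
    ∑ i ∈ s, w i * negMulLog (f i) - (∑ i ∈ s, w i * f i) * log (∑ i ∈ s, w i) ≤
      negMulLog (∑ i ∈ s, w i * f i) := by
  rcases (Finset.sum_nonneg hw).eq_or_lt' with h₀ | hpos
  · have hw₀ := (Finset.sum_eq_zero_iff_of_nonneg hw).1 h₀
    have hzero : ∀ g : ι → ℝ, ∑ i ∈ s, w i * g i = 0 := fun g =>
      Finset.sum_eq_zero fun i hi => by rw [hw₀ i hi, zero_mul]
    simp [hzero]
  · have jensen := concaveOn_negMulLog.le_map_centerMass hw hpos hf
    have inv_eq : negMulLog (∑ i ∈ s, w i)⁻¹ = (∑ i ∈ s, w i)⁻¹ * log (∑ i ∈ s, w i) := by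
      rw [negMulLog, log_inv, neg_mul_neg]
    simp only [Finset.centerMass, smul_eq_mul, Function.comp_apply, negMulLog_mul, inv_eq] at jensen
    rw [mul_left_comm, ← mul_add] at jensen
    exact sub_le_iff_le_add'.2 (le_of_mul_le_mul_left jensen (inv_pos.2 hpos))

variable {ι α : Type*} [Fintype ι] [Fintype α]

/-- The Shannon entropy, in nats, of the law proportional to the weights `f`, multiplied by their
total mass. This scaling makes a conditional entropy the plain sum of the entropies of the joint
law at the values of the side information. -/
noncomputable def scaledEntropy (f : α → ℝ) : ℝ :=
  ∑ x, negMulLog (f x) - negMulLog (∑ x, f x)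

lemma scaledEntropy_nonneg {f : α → ℝ} (hf : ∀ x, 0 ≤ f x) : 0 ≤ scaledEntropy f := by
  have hle : ∀ x, f x * log (f x) ≤ f x * log (∑ x, f x) := fun x => by
    rcases (hf x).eq_or_lt' with h | h
    · simp [h]
    · gcongr
      exact Finset.single_le_sum (fun x _ => hf x) (Finset.mem_univ x)
  have := Finset.sum_le_sum fun x (_ : x ∈ Finset.univ) => hle x
  simp only [scaledEntropy, negMulLog_eq_neg, Finset.sum_neg_distrib]
  rw [← Finset.sum_mul] at this
  linarith

lemma scaledEntropy_le_sum_mul_log_card {f : α → ℝ} (hf : ∀ x, 0 ≤ f x) :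
    scaledEntropy f ≤ (∑ x, f x) * log (Fintype.card α) := by
  have := sum_mul_negMulLog_sub_le (s := .univ) (w := fun _ => 1) (f := f)
    (fun _ _ => zero_le_one) fun x _ => hf x
  simp only [one_mul, Finset.sum_const, Finset.card_univ, nsmul_eq_mul, mul_one] at this
  rw [scaledEntropy]
  linarith

lemma sum_negMulLog_mul (a : ι → ℝ) (b : α → ℝ) :
    ∑ i, ∑ x, negMulLog (a i * b x) =
      (∑ x, b x) * ∑ i, negMulLog (a i) + (∑ i, a i) * ∑ x, negMulLog (b x) := by
  simp only [negMulLog_mul, Finset.sum_add_distrib, ← Finset.sum_mul, ← Finset.mul_sum]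

lemma mul_sum_negMulLog_add_le_sum_negMulLog_mix {w : ι → ℝ} {f : α → ℝ} (hw : ∀ i, 0 ≤ w i)
    (hf : ∀ x, 0 ≤ f x) (σ : ι → Equiv.Perm α) :
    (∑ i, w i) * ∑ x, negMulLog (f x) + (∑ x, f x) * negMulLog (∑ i, w i) ≤
      ∑ x, negMulLog (∑ i, w i * f (σ i x)) := by
  have sum_mix : ∀ g : α → ℝ, ∑ x, ∑ i, w i * g (σ i x) = (∑ i, w i) * ∑ x, g x := fun g => by
    rw [Finset.sum_comm, Finset.sum_mul]
    simp only [← Finset.mul_sum, Equiv.sum_comp (σ _) g]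
  calc _ = ∑ x, (∑ i, w i * negMulLog (f (σ i x)) -
          (∑ i, w i * f (σ i x)) * log (∑ i, w i)) := by
        rw [Finset.sum_sub_distrib, ← Finset.sum_mul, sum_mix f, sum_mix fun x => negMulLog (f x),
          negMulLog]
        ring
    _ ≤ _ := Finset.sum_le_sum fun x _ =>
        sum_mul_negMulLog_sub_le (fun i _ => hw i) fun i _ => hf (σ i x)

lemma sum_scaledEntropy_le_scaledEntropy_sum {G : Type*} [AddGroup G] [Fintype G] {a b : G → ℝ}
    (ha : ∀ x, 0 ≤ a x) (hb : ∀ x, 0 ≤ b x) :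
    ∑ u, scaledEntropy (fun v => a (u + v) * b v) ≤
      scaledEntropy fun u => ∑ v, a (u + v) * b v := by
  set c : G → ℝ := fun u => ∑ v, a (u + v) * b v with hc
  have shear : ∀ F : G → G → ℝ, ∑ u, ∑ v, F (u + v) v = ∑ s, ∑ v, F s v := fun F => by
    rw [Finset.sum_comm, Finset.sum_comm (f := F)]
    exact Finset.sum_congr rfl fun v _ => Equiv.sum_comp (Equiv.addRight v) fun s => F s v
  have mass : ∑ u, c u = (∑ x, a x) * ∑ x, b x := by
    rw [hc, shear fun s v => a s * b v, Finset.sum_mul_sum]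
  have joint := (shear fun s v => negMulLog (a s * b v)).trans (sum_negMulLog_mul a b)
  have mix_a := mul_sum_negMulLog_add_le_sum_negMulLog_mix hb ha Equiv.addRight
  have mix_b := mul_sum_negMulLog_add_le_sum_negMulLog_mix ha hb
    fun s => (Equiv.neg G).trans (Equiv.addRight s)
  have mix_a_eq : ∀ u, ∑ v, b v * a (Equiv.addRight v u) = c u := fun u =>
    Finset.sum_congr rfl fun v _ => mul_comm _ _
  have mix_b_eq : ∀ u, ∑ s, a s * b ((Equiv.neg G).trans (Equiv.addRight s) u) = c u := fun u => by
    rw [← Equiv.sum_comp (Equiv.addLeft u)]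
    simp [hc]
  simp only [mix_a_eq] at mix_a
  simp only [mix_b_eq] at mix_b
  simp only [scaledEntropy, Finset.sum_sub_distrib, joint, mass]
  rw [negMulLog_mul]
  linarith

end ScaledEntropy

section CondEnt

variable {α β γ : Type*} [Fintype α]

lemma neg_mul_logb_div_eq {x s : ℝ} (h : s = 0 → x = 0) :
    -(x * logb 2 (x / s)) = (negMulLog x + x * log s) / log 2 := by
  rcases eq_or_ne x 0 with rfl | hx
  · simp
  · rw [logb, log_div hx (mt h hx), negMulLog]
    ring

lemma condEnt_eq_tsum_scaledEntropy_div {q : α → β → ℝ} (hq : ∀ x y, 0 ≤ q x y) :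
    condEnt q = (∑' y, scaledEntropy fun x => q x y) / log 2 := by
  rw [condEnt, ← tsum_div_const]
  refine tsum_congr fun y => ?_
  have hzero : ∀ x, ∑ x, q x y = 0 → q x y = 0 := fun x h =>
    (Finset.sum_eq_zero_iff_of_nonneg fun x _ => hq x y).1 h x (Finset.mem_univ x)
  simp only [neg_mul_logb_div_eq (hzero _), ← Finset.sum_div, Finset.sum_add_distrib,
    ← Finset.sum_mul]
  rw [scaledEntropy, negMulLog]
  ring

lemma summable_scaledEntropy {q : α → β → ℝ} (hq : ∀ x y, 0 ≤ q x y)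
    (hs : ∀ x, Summable (q x)) : Summable fun y => scaledEntropy fun x => q x y :=
  .of_nonneg_of_le (fun y => scaledEntropy_nonneg fun x => hq x y)
    (fun y => scaledEntropy_le_sum_mul_log_card fun x => hq x y)
    ((summable_sum fun x _ => hs x).mul_right _)

lemma condEnt_eq_of_equiv (e : γ ≃ β) {q : α → β → ℝ} {r : α → γ → ℝ}
    (h : ∀ x y, r x y = q x (e y)) : condEnt r = condEnt q := by
  simp only [condEnt, h]
  exact e.tsum_eq fun y => ∑ x, -(q x y * logb 2 (q x y / ∑ x', q x' y))

end CondEnt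

section Polarization

variable {G β : Type*} [AddGroup G]

/-- The joint law of `(V, ((Y, Z), U))`, where `(S, Y)`, `(T, Z)` are independent with joint law
`q` and `S = U + V`, `T = V`: the second output of one polarization step, whose side information
contains the first output. -/
def polarPlus (q : G → β → ℝ) (v : G) (w : (β × β) × G) : ℝ :=
  q (w.2 + v) w.1.1 * q v w.1.2

/-- The joint law of `(U, (Y, Z))`, where `(S, Y)`, `(T, Z)` are independent with joint law `q`
and `S = U + V`, `T = V`: the first output of one polarization step. -/
def polarMinus [Fintype G] (q : G → β → ℝ) (u : G) (w : β × β) : ℝ :=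
  ∑ v, q (u + v) w.1 * q v w.2

variable {q : G → β → ℝ}

lemma polarPlus_nonneg (hq : ∀ x y, 0 ≤ q x y) (v : G) (w : (β × β) × G) :
    0 ≤ polarPlus q v w :=
  mul_nonneg (hq _ _) (hq _ _)

lemma summable_polarPlus [Finite G] (hq : ∀ x y, 0 ≤ q x y) (hs : ∀ x, Summable (q x)) (v : G) :
    Summable (polarPlus q v) := by
  rw [← (Equiv.prodComm G (β × β)).summable_iff]
  refine (summable_prod_of_nonneg fun _ => polarPlus_nonneg hq _ _).2 ⟨fun u => ?_, .of_finite⟩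
  exact (hs (u + v)).mul_of_nonneg (hs v) (hq _) (hq _)

variable [Fintype G]

lemma polarMinus_nonneg (hq : ∀ x y, 0 ≤ q x y) (u : G) (w : β × β) : 0 ≤ polarMinus q u w :=
  Finset.sum_nonneg fun _ _ => mul_nonneg (hq _ _) (hq _ _)

lemma summable_polarMinus (hq : ∀ x y, 0 ≤ q x y) (hs : ∀ x, Summable (q x)) (u : G) :
    Summable (polarMinus q u) :=
  summable_sum fun v _ => (hs (u + v)).mul_of_nonneg (hs v) (hq _) (hq _)

theorem condEnt_polarPlus_le_condEnt_polarMinus (hq : ∀ x y, 0 ≤ q x y)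
    (hs : ∀ x, Summable (q x)) : condEnt (polarPlus q) ≤ condEnt (polarMinus q) := by
  have hplus := summable_scaledEntropy (polarPlus_nonneg hq) (summable_polarPlus hq hs)
  have hminus := summable_scaledEntropy (polarMinus_nonneg hq) (summable_polarMinus hq hs)
  rw [condEnt_eq_tsum_scaledEntropy_div (polarPlus_nonneg hq),
    condEnt_eq_tsum_scaledEntropy_div (polarMinus_nonneg hq)]
  gcongr ?_ / _
  calc ∑' w, scaledEntropy (fun v => polarPlus q v w)
      = ∑' w, ∑ u, scaledEntropy fun v => polarPlus q v (w, u) := by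
        simp only [hplus.tsum_prod, tsum_fintype]
    _ ≤ ∑' w, scaledEntropy fun u => polarMinus q u w := by
        refine Summable.tsum_le_tsum (fun w => ?_) (by simpa only [tsum_fintype] using hplus.prod)
          hminus
        exact sum_scaledEntropy_le_scaledEntropy_sum (a := fun x => q x w.1)
          (b := fun x => q x w.2) (fun x => hq x w.1) fun x => hq x w.2

end Polarization

section FourfoldTransform

lemma sum_fin_four_arrow {α M : Type*} [Fintype α] [AddCommMonoid M] (F : α → α → α → α → M) :
    ∑ u : Fin 4 → α, F (u 0) (u 1) (u 2) (u 3) = ∑ a, ∑ b, ∑ c, ∑ d, F a b c d := by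
  have sum_vecCons : ∀ {n : ℕ} (F : (Fin (n + 1) → α) → M),
      ∑ u, F u = ∑ a, ∑ u, F (vecCons a u) := fun F => by
    rw [← (Fin.consEquiv fun _ => α).sum_comp, Fintype.sum_prod_type]
    rfl
  simp only [sum_vecCons, Fintype.sum_unique]
  rfl

variable {G κ : Type*} [AddGroup G]

/-- The analogue of `pU4` for sources with values in an additive group `G` and observations in
`κ`; the source symbols are recovered from `u` as `X⁴ = U⁴ G₄`. -/
def polarLaw (p : G → κ → ℝ) (u : Fin 4 → G) (y : Fin 4 → κ) : ℝ :=
  p (u 0 + u 1 + (u 2 + u 3)) (y 0) * p (u 2 + u 3) (y 1) *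
    (p (u 1 + u 3) (y 2) * p (u 3) (y 3))

lemma pU4_eq_polarLaw (p : ZMod 2 → ℕ → ℝ) : pU4 p = polarLaw p := by
  ext u y
  simp [pU4, polarLaw, G4, vecMul, dotProduct, Fin.prod_univ_four, Fin.sum_univ_four, add_assoc,
    mul_assoc]

/-- The observations `Y⁴`, grouped as the side information of two nested polarization steps. -/
def quadEquiv (κ : Type*) : (Fin 4 → κ) ≃ (κ × κ) × (κ × κ) where
  toFun y := ((y 0, y 1), (y 2, y 3))
  invFun z := ![z.1.1, z.1.2, z.2.1, z.2.2]
  left_inv y := by ext i; fin_cases i <;> rfl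
  right_inv _ := rfl

/-- The side information `(Y⁴, U₁, U₂)`, rewritten as that of an outer polarization step whose two
inputs are second outputs: these have seen the first outputs `U₁ + U₂` and `U₂`. -/
def quadPairEquiv (G κ : Type*) [AddGroup G] :
    (Fin 4 → κ) × G × G ≃ ((κ × κ) × G) × ((κ × κ) × G) where
  toFun w := (((w.1 0, w.1 1), w.2.1 + w.2.2), ((w.1 2, w.1 3), w.2.2))
  invFun z := ((quadEquiv κ).symm (z.1.1, z.2.1), z.1.2 - z.2.2, z.2.2)
  left_inv w := Prod.ext ((quadEquiv κ).symm_apply_apply w.1) (by simp)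
  right_inv z := Prod.ext (Prod.ext rfl (sub_add_cancel _ _)) rfl

/-- The side information `(Y⁴, U₁, U₂, U₃)`, where `U₃` is the first output of the outer step. -/
def quadTripleEquiv (G κ : Type*) [AddGroup G] :
    (Fin 4 → κ) × G × G × G ≃ (((κ × κ) × G) × ((κ × κ) × G)) × G :=
  ((Equiv.refl _).prodCongr (Equiv.prodAssoc G G G).symm).trans <|
    (Equiv.prodAssoc _ _ _).symm.trans <| (quadPairEquiv G κ).prodCongr (.refl G)

variable [Fintype G]

lemma sum_polarLaw (p : G → κ → ℝ) (a b c : G) (y : Fin 4 → κ) :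
    ∑ d, polarLaw p ![a, b, c, d] y =
      polarMinus (polarPlus p) c (quadPairEquiv G κ (y, a, b)) :=
  rfl

lemma sum_sum_polarLaw (p : G → κ → ℝ) (a b : G) (y : Fin 4 → κ) :
    ∑ c, ∑ d, polarLaw p ![a, b, c, d] y = polarPlus (polarMinus p) b (quadEquiv κ y, a) := by
  have reindex : ∀ d, ∑ c, p (a + b + (c + d)) (y 0) * p (c + d) (y 1) =
      polarMinus p (a + b) (y 0, y 1) := fun d =>
    Equiv.sum_comp (Equiv.addRight d) fun v => p (a + b + v) (y 0) * p v (y 1)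
  calc ∑ c, ∑ d, polarLaw p ![a, b, c, d] y
      = ∑ d, (∑ c, p (a + b + (c + d)) (y 0) * p (c + d) (y 1)) *
          (p (b + d) (y 2) * p d (y 3)) := by
        rw [Finset.sum_comm]
        simp only [Finset.sum_mul]
        rfl
    _ = polarPlus (polarMinus p) b (quadEquiv κ y, a) := by
        simp only [reindex, ← Finset.mul_sum]
        rfl

variable [DecidableEq G]

lemma condEnt_polarLaw_zero (p : G → κ → ℝ) :
    condEnt (fun (a : G) (y : Fin 4 → κ) =>
        ∑ u : Fin 4 → G, if u 0 = a then polarLaw p u y else 0) =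
      condEnt (polarMinus (polarMinus p)) :=
  condEnt_eq_of_equiv (quadEquiv κ) fun a y =>
    (sum_fin_four_arrow fun a' b' c' d' =>
      if a' = a then polarLaw p ![a', b', c', d'] y else 0).trans <| by
      change _ = ∑ b, polarPlus (polarMinus p) b (quadEquiv κ y, a)
      simp [← sum_sum_polarLaw]

lemma condEnt_polarLaw_one (p : G → κ → ℝ) :
    condEnt (fun (a : G) (w : (Fin 4 → κ) × G) =>
        ∑ u : Fin 4 → G, if u 0 = w.2 ∧ u 1 = a then polarLaw p u w.1 else 0) =
      condEnt (polarPlus (polarMinus p)) :=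
  condEnt_eq_of_equiv ((quadEquiv κ).prodCongr (.refl G)) fun b ⟨y, a⟩ =>
    (sum_fin_four_arrow fun a' b' c' d' =>
      if a' = a ∧ b' = b then polarLaw p ![a', b', c', d'] y else 0).trans <| by
      change _ = polarPlus (polarMinus p) b (quadEquiv κ y, a)
      simp [← sum_sum_polarLaw, ite_and]

lemma condEnt_polarLaw_two (p : G → κ → ℝ) :
    condEnt (fun (a : G) (w : (Fin 4 → κ) × G × G) =>
        ∑ u : Fin 4 → G,
          if u 0 = w.2.1 ∧ u 1 = w.2.2 ∧ u 2 = a then polarLaw p u w.1 else 0) =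
      condEnt (polarMinus (polarPlus p)) :=
  condEnt_eq_of_equiv (quadPairEquiv G κ) fun c ⟨y, a, b⟩ =>
    (sum_fin_four_arrow fun a' b' c' d' =>
      if a' = a ∧ b' = b ∧ c' = c then polarLaw p ![a', b', c', d'] y else 0).trans <| by
      simp [← sum_polarLaw, ite_and]

lemma condEnt_polarLaw_three (p : G → κ → ℝ) :
    condEnt (fun (a : G) (w : (Fin 4 → κ) × G × G × G) =>
        ∑ u : Fin 4 → G,
          if u 0 = w.2.1 ∧ u 1 = w.2.2.1 ∧ u 2 = w.2.2.2 ∧ u 3 = a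
          then polarLaw p u w.1 else 0) =
      condEnt (polarPlus (polarPlus p)) :=
  condEnt_eq_of_equiv (quadTripleEquiv G κ) fun d ⟨y, a, b, c⟩ =>
    (sum_fin_four_arrow fun a' b' c' d' =>
      if a' = a ∧ b' = b ∧ c' = c ∧ d' = d then polarLaw p ![a', b', c', d'] y else 0).trans <| by
      change _ = polarLaw p ![a, b, c, d] y
      simp [ite_and]

theorem stmt17_general (p : G → κ → ℝ) (hp : ∀ x y, 0 ≤ p x y) (hs : ∀ x, Summable (p x)) :
    (condEnt (fun (a : G) (y : Fin 4 → κ) =>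
        ∑ u : Fin 4 → G, if u 0 = a then polarLaw p u y else 0) ≥
      condEnt (fun (a : G) (w : (Fin 4 → κ) × G) =>
        ∑ u : Fin 4 → G, if u 0 = w.2 ∧ u 1 = a then polarLaw p u w.1 else 0)) ∧
    (condEnt (fun (a : G) (w : (Fin 4 → κ) × G × G) =>
        ∑ u : Fin 4 → G,
          if u 0 = w.2.1 ∧ u 1 = w.2.2 ∧ u 2 = a then polarLaw p u w.1 else 0) ≥
      condEnt (fun (a : G) (w : (Fin 4 → κ) × G × G × G) =>
        ∑ u : Fin 4 → G,
          if u 0 = w.2.1 ∧ u 1 = w.2.2.1 ∧ u 2 = w.2.2.2 ∧ u 3 = a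
          then polarLaw p u w.1 else 0)) := by
  rw [condEnt_polarLaw_zero, condEnt_polarLaw_one, condEnt_polarLaw_two, condEnt_polarLaw_three]
  exact ⟨condEnt_polarPlus_le_condEnt_polarMinus (polarMinus_nonneg hp) (summable_polarMinus hp hs),
    condEnt_polarPlus_le_condEnt_polarMinus (polarPlus_nonneg hp) (summable_polarPlus hp hs)⟩

end FourfoldTransform

/-- `H(U₁ | Y⁴) ≥ H(U₂ | Y⁴, U₁)` and `H(U₃ | Y⁴, U₁, U₂) ≥ H(U₄ | Y⁴, U₁, U₂, U₃)`. -/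
theorem stmt17 (p : ZMod 2 → ℕ → ℝ) (hp : ∀ x y, 0 ≤ p x y)
    (hsum : HasSum (fun z : ZMod 2 × ℕ => p z.1 z.2) 1) :
    (condEnt (fun (a : ZMod 2) (y : Fin 4 → ℕ) =>
        ∑ u : Fin 4 → ZMod 2, if u 0 = a then pU4 p u y else 0) ≥
      condEnt (fun (a : ZMod 2) (w : (Fin 4 → ℕ) × ZMod 2) =>
        ∑ u : Fin 4 → ZMod 2,
          if u 0 = w.2 ∧ u 1 = a then pU4 p u w.1 else 0)) ∧
    (condEnt (fun (a : ZMod 2) (w : (Fin 4 → ℕ) × ZMod 2 × ZMod 2) =>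
        ∑ u : Fin 4 → ZMod 2,
          if u 0 = w.2.1 ∧ u 1 = w.2.2 ∧ u 2 = a then pU4 p u w.1 else 0) ≥
      condEnt (fun (a : ZMod 2) (w : (Fin 4 → ℕ) × ZMod 2 × ZMod 2 × ZMod 2) =>
        ∑ u : Fin 4 → ZMod 2,
          if u 0 = w.2.1 ∧ u 1 = w.2.2.1 ∧ u 2 = w.2.2.2 ∧ u 3 = a
          then pU4 p u w.1 else 0)) := by
  simpa only [pU4_eq_polarLaw] using stmt17_general p hp hsum.summable.prod_factor
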